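/- arXiv:math/9801066 — 10 statements merged into one kernel-verified Lean document; each statement's English description precedes it below -/
import Mathlib

section
/- MacMahon's box formula: for natural numbers a, b, c, the number of plane partitions with at most a rows, at most b columns, and no part exceeding c — i.e., the number of functions f : Fin a × Fin b → Fin (c+1) that are antitone with respect to the product order on Fin a × Fin b — satisfies (number of such f) · ∏_{i=0}^{a-1} ∏_{j=0}^{b-1} ∏_{k=0}^{c-1} (i+j+k+1) = ∏_{i=0}^{a-1} ∏_{j=0}^{b-1} ∏_{k=0}^{c-1} (i+j+k+2). -/
section MacMahonAux

open Finset Matrix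

/-- Recursive count of (strict) Gelfand-Tsetlin patterns with top row `l`. -/
def gtCount : (n : ℕ) → (Fin n → ℕ) → ℕ
  | 0, _ => 1
  | n + 1, l => ∑ m ∈ Fintype.piFinset
      (fun i : Fin n => Finset.Ico (l i.castSucc) (l i.succ)), gtCount n m

theorem sum_Ico_choose_int (x y j : ℕ) (h : x ≤ y) :
    ∑ m ∈ Finset.Ico x y, (m.choose j : ℤ) = (y.choose (j+1) : ℤ) - x.choose (j+1) := by
  induction y, h using Nat.le_induction with
  | base => simp
  | succ y hy ih =>
    rw [Finset.sum_Ico_succ_top hy, ih, Nat.choose_succ_succ]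
    push_cast; ring

theorem det_choose_step (n : ℕ) (l : Fin (n+1) → ℕ) :
    (Matrix.of fun i j : Fin (n+1) => ((l i).choose j : ℤ)).det =
    (Matrix.of fun i j : Fin n =>
      (((l i.succ).choose (j+1) : ℤ) - (l i.castSucc).choose (j+1))).det := by
  rw [Matrix.det_eq_of_forall_row_eq_smul_add_pred (n := n)
    (A := Matrix.of fun i j : Fin (n+1) => ((l i).choose j : ℤ))
    (B := Matrix.of fun i j : Fin (n+1) => Fin.cases (motive := fun _ => ℤ) ((l 0).choose j : ℤ)
      (fun i => ((l i.succ).choose j : ℤ) - (l i.castSucc).choose j) i)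
    (fun _ => 1) (by intro j; simp) (by intro i j; simp)]
  rw [Matrix.det_succ_column_zero, Fin.sum_univ_succ]
  simp
  rfl

theorem gtCount_eq_det (n : ℕ) (l : Fin n → ℕ) (hl : Monotone l) :
    (gtCount n l : ℤ) = (Matrix.of fun i j : Fin n => ((l i).choose j : ℤ)).det := by
  induction n with
  | zero => simp [gtCount]
  | succ n ih =>
    rw [det_choose_step, gtCount]
    push_cast
    have key := (Matrix.detRowAlternating (n := Fin n) (R := ℤ)).toMultilinearMap.map_sum_finset
      (fun (i : Fin n) (m : ℕ) (j : Fin n) => (m.choose j : ℤ))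
      (fun i : Fin n => Finset.Ico (l i.castSucc) (l i.succ))
    have e : (Matrix.of fun i j : Fin n =>
      (((l i.succ).choose (j+1) : ℤ) - (l i.castSucc).choose (j+1))) =
      fun i => ∑ m ∈ Finset.Ico (l i.castSucc) (l i.succ), fun j : Fin n => (m.choose j : ℤ) := by
      ext i j
      rw [Finset.sum_apply, sum_Ico_choose_int _ _ _ (hl (Fin.castSucc_lt_succ).le)]
      rfl
    rw [e]
    refine Eq.trans ?_ key.symm
    refine Finset.sum_congr rfl fun m hm => ?_
    rw [Fintype.mem_piFinset] at hm
    rw [ih m]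
    · rfl
    · intro i j hij
      rcases hij.eq_or_lt with h | h
      · rw [h]
      · have h1 := Finset.mem_Ico.1 (hm i)
        have h2 := Finset.mem_Ico.1 (hm j)
        have h3 : l i.succ ≤ l j.castSucc := hl (by
          rw [Fin.le_def]; simp; exact h)
        omega

theorem det_choose_vandermonde (n : ℕ) (l : ℕ → ℕ) :
    (∏ i : Fin n, ((i : ℕ).factorial : ℤ)) *
      (Matrix.of fun i j : Fin n => ((l i).choose j : ℤ)).det =
    ∏ j ∈ range n, ∏ i ∈ range j, ((l j : ℤ) - l i) := by
  have h := det_eval_matrixOfPolynomials_eq_det_vandermonde (fun i : Fin n ↦ (l i : ℤ))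
      (fun i => descPochhammer ℤ i)
      (fun i => descPochhammer_natDegree ℤ i)
      (fun i => monic_descPochhammer ℤ i)
  have h2 : (∏ j ∈ range n, ∏ i ∈ range j, ((l j : ℤ) - l i)) =
      (vandermonde (fun i : Fin n ↦ (l i : ℤ))).det := by
    rw [det_vandermonde]
    induction n with
    | zero => simp
    | succ n ih =>
      have ih := ih (det_eval_matrixOfPolynomials_eq_det_vandermonde (fun i : Fin n ↦ (l i : ℤ))
        (fun i => descPochhammer ℤ i)
        (fun i => descPochhammer_natDegree ℤ i)
        (fun i => monic_descPochhammer ℤ i))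
      rw [Finset.prod_range_succ, ih, Fin.prod_univ_castSucc]
      have e : ∀ i : Fin n, Finset.Ioi (i.castSucc) =
          insert (Fin.last n) ((Finset.Ioi i).map Fin.castSuccEmb) := by
        intro i; ext j
        refine Fin.lastCases ?_ (fun j => ?_) j
        · simp [Fin.castSucc_lt_last]
        · simp [Fin.le_last]
      have e2 : Finset.Ioi (Fin.last n) = ∅ := by
        ext j; simp [Fin.le_last]
      simp only [e, e2, Finset.prod_empty, mul_one]
      rw [Finset.prod_range, ← Finset.prod_mul_distrib]
      refine Finset.prod_congr rfl fun i _ => ?_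
      rw [Finset.prod_insert (by simp), mul_comm, Finset.prod_map]
      simp
  rw [h2, h]
  symm
  convert! det_mul_row (fun (i : Fin n) => ((Nat.factorial (i : ℕ)) : ℤ)) _
  rw [of_apply, descPochhammer_eval_eq_descFactorial ℤ _ _]
  rw [Nat.descFactorial_eq_factorial_mul_choose]
  simp

theorem det_choose_id (n : ℕ) :
    (Matrix.of fun i j : Fin n => (((i : ℕ)).choose j : ℤ)).det = 1 := by
  rw [Matrix.det_of_isLowerTriangular]
  · simp
  · intro i j h
    simp only [of_apply]
    have : (i : ℕ) < j := h
    simp [Nat.choose_eq_zero_of_lt this]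

/-- The strict top row `0,1,…,b-1,b+c,…,b+a-1+c`. -/
def topRow (b c i : ℕ) : ℕ := if i < b then i else i + c

theorem topRow_vandermonde (a b c : ℕ) :
    ∏ j ∈ range (b + a), ∏ i ∈ range j, ((topRow b c j : ℤ) - topRow b c i) =
    (∏ j ∈ range b, ∏ i ∈ range j, ((j : ℤ) - i)) *
      (∏ s ∈ range a, ∏ t ∈ range s, ((s : ℤ) - t)) *
      ∏ s ∈ range a, ∏ t ∈ range b, ((s + t + 1 + c : ℕ) : ℤ) := by
  rw [Finset.prod_range_add, mul_assoc, ← Finset.prod_mul_distrib]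
  congr 1
  · refine Finset.prod_congr rfl fun j hj => Finset.prod_congr rfl fun i hi => ?_
    rw [Finset.mem_range] at hi hj
    rw [topRow, topRow, if_pos hj, if_pos (by omega)]
  · refine Finset.prod_congr rfl fun s hs => ?_
    rw [Finset.prod_range_add, mul_comm]
    congr 1
    · refine Finset.prod_congr rfl fun t ht => ?_
      rw [topRow, topRow, if_neg (by omega), if_neg (by omega)]
      push_cast; ring
    · rw [← Finset.prod_range_reflect]
      refine Finset.prod_congr rfl fun t ht => ?_
      rw [Finset.mem_range] at ht
      rw [topRow, topRow, if_neg (by omega), if_pos (by omega)]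
      omega

theorem gtCount_topRow (a b c : ℕ) :
    gtCount (b + a) (fun i => topRow b c i) * (∏ s ∈ range a, ∏ t ∈ range b, (s + t + 1)) =
      ∏ s ∈ range a, ∏ t ∈ range b, (s + t + 1 + c) := by
  have hm : Monotone (fun i : Fin (b+a) => topRow b c i) := by
    intro i j hij
    have : (i : ℕ) ≤ j := hij
    simp only [topRow]
    split_ifs <;> omega
  have h0 := det_choose_vandermonde (b + a) (topRow b 0)
  have hc := det_choose_vandermonde (b + a) (topRow b c)
  rw [topRow_vandermonde] at h0 hc
  have e0 : ∀ i, topRow b 0 i = i := by intro i; simp [topRow]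
  simp only [e0, det_choose_id, mul_one, add_zero] at h0
  rw [← gtCount_eq_det _ _ hm, h0] at hc
  have pos : ∀ n : ℕ, (∏ j ∈ range n, ∏ i ∈ range j, ((j : ℤ) - i)) ≠ 0 := by
    intro n
    refine Finset.prod_ne_zero_iff.2 fun j hj => Finset.prod_ne_zero_iff.2 fun i hi => ?_
    rw [Finset.mem_range] at hi
    omega
  have := mul_left_cancel₀ (mul_ne_zero (pos b) (pos a)) ((mul_assoc _ _ _).symm.trans hc)
  zify
  push_cast at this
  rw [mul_comm]
  exact this

theorem final_arith (a b c N : ℕ)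
    (h : N * (∏ s ∈ range a, ∏ t ∈ range b, (s + t + 1)) =
      ∏ s ∈ range a, ∏ t ∈ range b, (s + t + 1 + c)) :
    N * (∏ i ∈ range a, ∏ j ∈ range b, ∏ k ∈ range c, (i + j + k + 1)) =
    ∏ i ∈ range a, ∏ j ∈ range b, ∏ k ∈ range c, (i + j + k + 2) := by
  have h2 : (∏ i ∈ range a, ∏ j ∈ range b, ∏ k ∈ range c, (i + j + k + 1)) *
      (∏ s ∈ range a, ∏ t ∈ range b, (s + t + 1 + c)) =
      (∏ i ∈ range a, ∏ j ∈ range b, ∏ k ∈ range c, (i + j + k + 2)) *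
      (∏ s ∈ range a, ∏ t ∈ range b, (s + t + 1)) := by
    simp only [← Finset.prod_mul_distrib]
    refine Finset.prod_congr rfl fun i _ => Finset.prod_congr rfl fun j _ => ?_
    have := (Finset.prod_range_succ (fun k => i + j + k + 1) c).symm.trans
      (Finset.prod_range_succ' (fun k => i + j + k + 1) c)
    simpa [add_assoc, add_comm, add_left_comm] using this
  have hp : 0 < ∏ s ∈ range a, ∏ t ∈ range b, (s + t + 1) :=
    Finset.prod_pos fun _ _ => Finset.prod_pos fun _ _ => by omega
  refine Nat.eq_of_mul_eq_mul_right hp ?_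
  rw [← h2, ← h]; ring

/-- Gelfand-Tsetlin patterns in rotated coordinates, normalized to be `0` off the triangle. -/
def gtSet (n : ℕ) (l : Fin n → ℕ) : Set (ℕ → ℕ → ℕ) :=
  {X | (∀ i : Fin n, X i (n - 1 - i) + i = l i) ∧
    (∀ p q, p + q + 1 < n → X p (q + 1) ≤ X p q ∧ X p q ≤ X (p + 1) q) ∧
    ∀ p q, n ≤ p + q → X p q = 0}

/-- Adding a top row to a pattern. -/
def gtExtend (n : ℕ) (l : ℕ → ℕ) (Y : ℕ → ℕ → ℕ) : ℕ → ℕ → ℕ := fun p q =>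
  if p + q < n then Y p q else if p + q = n then l p - p else 0

theorem gtExtend_mem (n : ℕ) (l : ℕ → ℕ) (m : Fin n → ℕ)
    (hm : ∀ i : Fin n, l i ≤ m i ∧ m i < l (i + 1)) (Y : ℕ → ℕ → ℕ) (hY : Y ∈ gtSet n m) :
    gtExtend n l Y ∈ gtSet (n + 1) (fun i => l i) := by
  obtain ⟨h1, h2, h3⟩ := hY
  have hl : ∀ p, p ≤ n → p ≤ l p := by
    intro p hp
    rcases p with _ | p
    · omega
    · have := h1 ⟨p, by omega⟩
      have := hm ⟨p, by omega⟩
      simp only at *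
      omega
  refine ⟨?_, ?_, ?_⟩
  · intro i
    have hi := i.isLt
    have := hl i (by omega)
    simp only [gtExtend]
    rw [if_neg (by omega), if_pos (by omega)]
    omega
  · intro p q hpq
    simp only [gtExtend]
    rw [if_pos (show p + q < n by omega)]
    by_cases h : p + q + 1 < n
    · rw [if_pos (by omega), if_pos (by omega)]
      exact h2 p q h
    · rw [if_neg (by omega), if_pos (by omega), if_neg (by omega), if_pos (by omega)]
      have a1 := h1 ⟨p, by omega⟩
      have a2 := hm ⟨p, by omega⟩
      simp only at a1 a2
      have : n - 1 - p = q := by omega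
      rw [this] at a1
      omega
  · intro p q hpq
    simp only [gtExtend]
    rw [if_neg (by omega), if_neg (by omega)]

theorem gtSet_card (n : ℕ) (l : Fin n → ℕ) :
    Finite (gtSet n l) ∧ Nat.card (gtSet n l) = gtCount n l := by
  induction n with
  | zero =>
    have : gtSet 0 l = {fun _ _ => 0} := by
      ext X
      simp only [gtSet, Set.mem_ofPred_eq, Set.mem_singleton_iff]
      constructor
      · intro h
        funext p q
        exact h.2.2 p q (by omega)
      · rintro rfl
        exact ⟨fun i => i.elim0, fun _ _ h => by omega, fun _ _ _ => rfl⟩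
    rw [this]
    refine ⟨inferInstance, ?_⟩
    simp [gtCount]
  | succ n ih =>
    obtain ⟨L, rfl⟩ : ∃ L : ℕ → ℕ, l = fun i : Fin (n + 1) => L (i : ℕ) :=
      ⟨fun i => if h : i < n + 1 then l ⟨i, h⟩ else 0, by funext i; simp only [dif_pos i.isLt]⟩
    set S := Fintype.piFinset
      (fun i : Fin n => Finset.Ico (L (i.castSucc : Fin (n+1))) (L (i.succ : Fin (n+1)))) with hS
    have hSm : ∀ m : Fin n → ℕ, m ∈ S ↔ ∀ i : Fin n, L i ≤ m i ∧ m i < L (i + 1) := by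
      intro m
      rw [hS, Fintype.mem_piFinset]
      simp
    let g : (Σ m : S, gtSet n m.1) → gtSet (n + 1) (fun i => L i) := fun x =>
      ⟨gtExtend n L x.2.1, gtExtend_mem n L x.1.1 ((hSm _).1 x.1.2) x.2.1 x.2.2⟩
    have hg : Function.Bijective g := by
      constructor
      · rintro ⟨⟨m, hm⟩, ⟨Y, hY⟩⟩ ⟨⟨m', hm'⟩, ⟨Y', hY'⟩⟩ h
        have h0 : gtExtend n L Y = gtExtend n L Y' := congrArg Subtype.val h
        have hYY : Y = Y' := by
          funext p q
          by_cases hpq : p + q < n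
          · have := congrFun (congrFun h0 p) q
            simpa only [gtExtend, if_pos hpq] using this
          · rw [hY.2.2 p q (by omega), hY'.2.2 p q (by omega)]
        subst hYY
        have hmm : m = m' := by
          funext i
          exact (hY.1 i).symm.trans (hY'.1 i)
        subst hmm
        rfl
      · rintro ⟨X, h1, h2, h3⟩
        refine ⟨⟨⟨fun i => X i (n - 1 - i) + i, ?_⟩,
          ⟨fun p q => if p + q < n then X p q else 0, ?_, ?_, ?_⟩⟩, ?_⟩
        · rw [hSm]
          intro i
          have hi := i.isLt
          have a1 := h1 i.castSucc
          have a2 := h1 i.succ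
          have a3 := h2 i (n - 1 - i) (by omega)
          simp only [Fin.val_castSucc, Fin.val_succ] at a1 a2
          rw [show n + 1 - 1 - (i : ℕ) = n - 1 - i + 1 by omega] at a1
          rw [show n + 1 - 1 - ((i : ℕ) + 1) = n - 1 - i by omega] at a2
          omega
        · intro i
          have hi := i.isLt
          simp only
          rw [if_pos (by omega)]
        · intro p q hpq
          simp only
          rw [if_pos (by omega), if_pos (by omega), if_pos (by omega)]
          exact h2 p q (by omega)
        · intro p q hpq
          simp only
          rw [if_neg (by omega)]
        · apply Subtype.ext
          funext p q
          simp only [g, gtExtend]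
          by_cases hpq : p + q < n
          · rw [if_pos hpq, if_pos hpq]
          · rw [if_neg hpq]
            by_cases hpq' : p + q = n
            · rw [if_pos hpq']
              have a1 := h1 ⟨p, by omega⟩
              simp only at a1
              rw [show n + 1 - 1 - p = q by omega] at a1
              omega
            · rw [if_neg hpq', h3 p q (by omega)]
    have hfin : ∀ m : S, Finite (gtSet n m.1) := fun m => (ih m.1).1
    refine ⟨Finite.of_surjective g hg.2, ?_⟩
    rw [← Nat.card_congr (Equiv.ofBijective g hg), Nat.card_sigma, gtCount]
    rw [Finset.sum_congr rfl (fun (m : S) _ => (ih m.1).2)]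
    exact Finset.sum_coe_sort S (fun m => gtCount n m)

theorem gtSet_mono_left {n : ℕ} {l : Fin n → ℕ} {X : ℕ → ℕ → ℕ} (hX : X ∈ gtSet n l)
    (p q d : ℕ) (h : p + d + q < n) : X p q ≤ X (p + d) q := by
  induction d with
  | zero => exact le_rfl
  | succ d ih => exact (ih (by omega)).trans (hX.2.1 (p + d) q (by omega)).2

theorem gtSet_anti_right {n : ℕ} {l : Fin n → ℕ} {X : ℕ → ℕ → ℕ} (hX : X ∈ gtSet n l)
    (p q d : ℕ) (h : p + (q + d) < n) : X p (q + d) ≤ X p q := by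
  induction d with
  | zero => exact le_rfl
  | succ d ih => exact (hX.2.1 p (q + d) (by omega)).1.trans (ih (by omega))

/-- The pattern attached to a plane partition. -/
def ppToGT (a b c : ℕ) (f : Fin a × Fin b → Fin (c + 1)) : ℕ → ℕ → ℕ := fun p q =>
  if b + a ≤ p + q then 0 else if h : b ≤ p then c else if h' : a ≤ q then 0 else
    (f (⟨q, by omega⟩, ⟨b - 1 - p, by omega⟩) : ℕ)

theorem ppToGT_mem (a b c : ℕ) (f : Fin a × Fin b → Fin (c + 1)) (hf : Antitone f) :
    ppToGT a b c f ∈ gtSet (b + a) (fun i => topRow b c i) := by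
  refine ⟨?_, ?_, ?_⟩
  · intro i
    have hi := i.isLt
    simp only [ppToGT, topRow]
    rw [if_neg (by omega)]
    by_cases h : b ≤ (i : ℕ)
    · rw [dif_pos h, if_neg (by omega)]; omega
    · rw [dif_neg h, dif_pos (by omega), if_pos (by omega)]; omega
  · intro p q hpq
    simp only [ppToGT]
    rw [if_neg (by omega), if_neg (by omega), if_neg (by omega)]
    constructor
    · by_cases h : b ≤ p
      · rw [dif_pos h, dif_pos h]
      · rw [dif_neg h, dif_neg h]
        by_cases h' : a ≤ q + 1
        · rw [dif_pos h']; exact Nat.zero_le _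
        · rw [dif_neg h', dif_neg (by omega)]
          apply hf
          rw [Prod.mk_le_mk]
          simp [Fin.le_def]
    · by_cases h : b ≤ p + 1
      · rw [dif_pos h]
        split_ifs
        · exact le_rfl
        · exact Nat.zero_le _
        · exact Fin.is_le _
      · rw [dif_neg h, dif_neg (by omega)]
        by_cases h' : a ≤ q
        · rw [dif_pos h', dif_pos h']
        · rw [dif_neg h', dif_neg h']
          apply hf
          rw [Prod.mk_le_mk]
          simp only [Fin.le_def]
          omega
  · intro p q hpq
    simp only [ppToGT]
    rw [if_pos hpq]

theorem pp_card (a b c : ℕ) :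
    Nat.card {f : Fin a × Fin b → Fin (c + 1) // Antitone f} =
      gtCount (b + a) (fun i => topRow b c i) := by
  rw [← (gtSet_card _ _).2]
  refine Nat.card_congr (Equiv.ofBijective
    (fun f => ⟨ppToGT a b c f.1, ppToGT_mem a b c f.1 f.2⟩) ⟨?_, ?_⟩)
  · rintro ⟨f, hf⟩ ⟨f', hf'⟩ h
    have h0 : ppToGT a b c f = ppToGT a b c f' := congrArg Subtype.val h
    apply Subtype.ext
    funext ⟨⟨q, hq⟩, ⟨p, hp⟩⟩
    have := congrFun (congrFun h0 (b - 1 - p)) q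
    simp only [ppToGT] at this
    rw [if_neg (by omega), if_neg (by omega), dif_neg (by omega), dif_neg (by omega),
      dif_neg (by omega), dif_neg (by omega)] at this
    have e : b - 1 - (b - 1 - p) = p := by omega
    simp only [e] at this
    exact Fin.ext this
  · rintro ⟨X, hX⟩
    have top : ∀ p q, p + q + 1 = b + a → X p q = if p < b then 0 else c := by
      intro p q hpq
      have := hX.1 ⟨p, by omega⟩
      simp only [topRow] at this
      rw [show b + a - 1 - p = q by omega] at this
      split_ifs at this ⊢ <;> omega
    have up : ∀ p q, p + q < b + a → X p q ≤ if a ≤ q then 0 else c := by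
      intro p q hpq
      have h1 := gtSet_mono_left hX p q (b + a - 1 - q - p) (by omega)
      rw [top (p + (b + a - 1 - q - p)) q (by omega)] at h1
      split_ifs at h1 ⊢ <;> omega
    have lo : ∀ p q, p + q < b + a → b ≤ p → c ≤ X p q := by
      intro p q hpq hp
      have h1 := gtSet_anti_right hX p q (b + a - 1 - q - p) (by omega)
      rw [top p (q + (b + a - 1 - q - p)) (by omega), if_neg (by omega)] at h1
      exact h1
    refine ⟨⟨fun x => ⟨X (b - 1 - x.2) x.1, ?_⟩, ?_⟩, ?_⟩
    · have h1 := x.1.isLt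
      have h2 := x.2.isLt
      have := up (b - 1 - x.2) x.1 (by omega)
      rw [if_neg (by omega)] at this
      omega
    · rintro ⟨⟨q, hq⟩, ⟨p, hp⟩⟩ ⟨⟨q', hq'⟩, ⟨p', hp'⟩⟩ h
      rw [Prod.mk_le_mk, Fin.mk_le_mk, Fin.mk_le_mk] at h
      obtain ⟨h1, h2⟩ := h
      rw [Fin.mk_le_mk]
      simp only
      have e1 := gtSet_mono_left hX (b - 1 - p') q' (p' - p) (by omega)
      have e2 := gtSet_anti_right hX (b - 1 - p) q (q' - q) (by omega)
      rw [show b - 1 - p' + (p' - p) = b - 1 - p by omega] at e1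
      rw [show q + (q' - q) = q' by omega] at e2
      exact e1.trans e2
    · apply Subtype.ext
      funext p q
      simp only [ppToGT]
      split_ifs with h1 h2 h3
      · exact (hX.2.2 p q h1).symm
      · have e1 := up p q (by omega)
        have e2 := lo p q (by omega) h2
        split_ifs at e1 <;> omega
      · have e1 := up p q (by omega)
        rw [if_pos h3] at e1
        omega
      · rw [show b - 1 - (b - 1 - p) = p by omega]

end MacMahonAux

/-- MacMahon's box formula, stated multiplicatively: the number of plane
partitions with at most `a` rows, at most `b` columns, and no part exceeding
`c` (encoded as antitone functions `Fin a × Fin b → Fin (c+1)` for the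
componentwise order) times `∏∏∏ (i+j+k+1)` equals `∏∏∏ (i+j+k+2)`. -/
theorem macmahon_box_formula (a b c : ℕ) :
    Nat.card {f : Fin a × Fin b → Fin (c + 1) // Antitone f} *
      (∏ i ∈ Finset.range a, ∏ j ∈ Finset.range b, ∏ k ∈ Finset.range c,
        (i + j + k + 1)) =
    ∏ i ∈ Finset.range a, ∏ j ∈ Finset.range b, ∏ k ∈ Finset.range c,
      (i + j + k + 2) := by
  rw [pp_card]
  exact final_arith a b c _ (gtCount_topRow a b c)
end

section
/- For natural numbers a and b, the specialization of MacMahon's product formula at c = 1 is the binomial coefficient: ∏_{i=0}^{a-1} ∏_{j=0}^{b-1} (i+j+2) = (a+b choose a) · ∏_{i=0}^{a-1} ∏_{j=0}^{b-1} (i+j+1). -/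
theorem macmahon_row (a b : ℕ) :
    (a + 1) * ∏ j ∈ Finset.range b, (a + j + 2) =
      (a + b + 1) * ∏ j ∈ Finset.range b, (a + j + 1) := by
  induction b with
  | zero => simp
  | succ b ih =>
    rw [Finset.prod_range_succ, Finset.prod_range_succ, ← mul_assoc, ih]
    ring

/-- The specialization of MacMahon's product formula at `c = 1`, stated
multiplicatively: `∏_{i<a} ∏_{j<b} (i+j+2) = (a+b choose a) · ∏_{i<a} ∏_{j<b} (i+j+1)`. -/
theorem macmahon_c_eq_one (a b : ℕ) :
    ∏ i ∈ Finset.range a, ∏ j ∈ Finset.range b, (i + j + 2) =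
      (a + b).choose a * ∏ i ∈ Finset.range a, ∏ j ∈ Finset.range b, (i + j + 1) := by
  induction a with
  | zero => simp
  | succ a ih =>
    rw [Finset.prod_range_succ, Finset.prod_range_succ, ih]
    have h1 := macmahon_row a b
    have h2 := Nat.add_one_mul_choose_eq (a + b) a
    have h3 : a + 1 + b = a + b + 1 := by omega
    rw [h3]
    generalize ∏ i ∈ Finset.range a, ∏ j ∈ Finset.range b, (i + j + 1) = P at *
    generalize ∏ j ∈ Finset.range b, (a + j + 2) = Q2 at *
    generalize ∏ j ∈ Finset.range b, (a + j + 1) = Q1 at *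
    apply Nat.eq_of_mul_eq_mul_left (Nat.succ_pos a)
    calc (a + 1) * ((a + b).choose a * P * Q2)
        = (a + b).choose a * P * ((a + 1) * Q2) := by ring
      _ = ((a + b + 1) * (a + b).choose a) * (P * Q1) := by rw [h1]; ring
      _ = (a + 1) * ((a + b + 1).choose (a + 1) * (P * Q1)) := by rw [h2]; ring
end

section
/- Let P be a finite partially ordered set. For any two lower sets s and t of P there exist n and a sequence of lower sets s = c_0, c_1, …, c_n = t such that for each m < n the symmetric difference of c_m and c_{m+1} is a singleton (consists of exactly one element of P). In other words, the graph on the lower sets of P in which two lower sets are adjacent iff their symmetric difference has exactly one element is connected. -/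
/-- One step towards `t`: remove a maximal element of `s \ t`, or add a minimal one of `t \ s`. -/
theorem lowerSet_step {P : Type*} [Fintype P] [PartialOrder P]
    (s t : Set P) (hs : IsLowerSet s) (ht : IsLowerSet t) (hne : s ≠ t) :
    ∃ (s' : Set P) (x : P), IsLowerSet s' ∧ symmDiff s s' = {x} ∧
      symmDiff s' t ⊂ symmDiff s t := by
  by_cases h : (s \ t).Nonempty
  · obtain ⟨x, hx⟩ := (Set.toFinite (s \ t)).exists_maximal h
    have hxs : x ∈ s := hx.prop.1
    have hxt : x ∉ t := hx.prop.2
    refine ⟨s \ {x}, x, ?_, ?_, ?_⟩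
    · rintro z y hyz ⟨hz, hzx⟩
      refine ⟨hs hyz hz, ?_⟩
      rintro rfl
      exact hzx (hx.eq_of_le ⟨hz, fun h' => hxt (ht hyz h')⟩ hyz).symm
    · ext y
      simp only [Set.mem_symmDiff, Set.mem_diff, Set.mem_singleton_iff]
      grind
    · rw [Set.ssubset_iff_of_subset]
      · exact ⟨x, by simp only [Set.mem_symmDiff]; grind,
          by simp only [Set.mem_symmDiff, Set.mem_diff, Set.mem_singleton_iff]; grind⟩
      · intro y
        simp only [Set.mem_symmDiff, Set.mem_diff, Set.mem_singleton_iff]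
        grind
  · have hst : s ⊆ t := by
      intro y hy
      by_contra hyt
      exact h ⟨y, hy, hyt⟩
    have h2 : (t \ s).Nonempty := by
      rw [Set.diff_nonempty]
      exact fun h' => hne (hst.antisymm h')
    obtain ⟨x, hx⟩ := (Set.toFinite (t \ s)).exists_minimal h2
    have hxt : x ∈ t := hx.prop.1
    have hxs : x ∉ s := hx.prop.2
    refine ⟨insert x s, x, ?_, ?_, ?_⟩
    · rintro z y hyz (rfl | hz)
      · by_cases hy : y ∈ s
        · exact Or.inr hy
        · exact Or.inl (hx.eq_of_ge ⟨ht hyz hxt, hy⟩ hyz).symm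
      · exact Or.inr (hs hyz hz)
    · ext y
      simp only [Set.mem_symmDiff, Set.mem_insert_iff, Set.mem_singleton_iff]
      grind
    · rw [Set.ssubset_iff_of_subset]
      · exact ⟨x, by simp only [Set.mem_symmDiff]; grind,
          by simp only [Set.mem_symmDiff, Set.mem_insert_iff]; grind⟩
      · intro y
        simp only [Set.mem_symmDiff, Set.mem_insert_iff]
        grind

/-- The graph on the lower sets of a finite poset `P`, in which two lower sets
are adjacent iff their symmetric difference is a singleton, is connected: any
two lower sets `s` and `t` are joined by a path `s = c 0, c 1, …, c n = t` of
lower sets in which consecutive terms have symmetric difference consisting of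
exactly one element of `P`. -/
theorem lowerSet_graph_connected {P : Type*} [Fintype P] [PartialOrder P]
    (s t : Set P) (hs : IsLowerSet s) (ht : IsLowerSet t) :
    ∃ (n : ℕ) (c : ℕ → Set P),
      (∀ m ≤ n, IsLowerSet (c m)) ∧ c 0 = s ∧ c n = t ∧
      ∀ m < n, ∃ x : P, symmDiff (c m) (c (m + 1)) = {x} := by
  induction hk : (symmDiff s t).ncard using Nat.strong_induction_on generalizing s with
  | _ k ih =>
    by_cases hne : s = t
    · exact ⟨0, fun _ => s, fun _ _ => hs, rfl, hne, fun m hm => absurd hm (Nat.not_lt_zero m)⟩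
    · obtain ⟨s', x, hs', hx, hlt⟩ := lowerSet_step s t hs ht hne
      obtain ⟨n, c, h1, h2, h3, h4⟩ :=
        ih _ (hk ▸ Set.ncard_lt_ncard hlt (Set.toFinite _)) s' hs' rfl
      refine ⟨n + 1, fun m => Nat.casesOn m s c, ?_, rfl, h3, ?_⟩
      · rintro (_ | m) hm
        · exact hs
        · exact h1 m (by omega)
      · rintro (_ | m) hm
        · exact ⟨x, by simpa [h2] using hx⟩
        · exact h4 m (by omega)
end

section
/- Let P be a finite partially ordered set. Define the single-site update: for a subset I ⊆ P, an element x ∈ P, and a Boolean coin b, let up(I,x,true) = I ∪ {x} if I ∪ {x} is a lower set and I otherwise, and up(I,x,false) = I \ {x} if I \ {x} is a lower set and I otherwise. Then: (a) if I is a lower set, so is up(I,x,b); and (b) the update is monotone: if I and J are lower sets with I ⊆ J, then up(I,x,b) ⊆ up(J,x,b) for every x ∈ P and every Boolean b. -/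
attribute [local instance] Classical.propDecidable

/-- The single-site update of the Monte Carlo algorithm: at site `x` with coin
`b`, attempt to adjoin `x` (if `b = true`) or delete `x` (if `b = false`),
leaving `I` unchanged whenever the result would fail to be a lower set. -/
noncomputable def up {P : Type*} [PartialOrder P] (I : Set P) (x : P) (b : Bool) : Set P :=
  if b then (if IsLowerSet (I ∪ {x}) then I ∪ {x} else I)
  else (if IsLowerSet (I \ {x}) then I \ {x} else I)

/-- (a) The single-site update sends lower sets to lower sets, and
(b) it is monotone with respect to inclusion: if lower sets satisfy `I ⊆ J`,
then `up I x b ⊆ up J x b` for every site `x` and coin `b`. -/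
theorem up_isLowerSet_and_monotone {P : Type*} [Fintype P] [PartialOrder P] :
    (∀ (I : Set P) (x : P) (b : Bool), IsLowerSet I → IsLowerSet (up I x b)) ∧
    (∀ (I J : Set P), IsLowerSet I → IsLowerSet J → I ⊆ J →
      ∀ (x : P) (b : Bool), up I x b ⊆ up J x b) := by
  constructor
  · intro I x b hI
    unfold up
    split_ifs <;> assumption
  · intro I J hI hJ hIJ x b
    unfold up
    split_ifs with hb h1 h2 h2 h1 h2 h2
    · exact Set.union_subset_union_left _ hIJ
    · exfalso
      apply h2
      have e : J ∪ {x} = J ∪ (I ∪ {x}) := by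
        rw [← Set.union_assoc, Set.union_eq_self_of_subset_right hIJ]
      rw [e]
      exact hJ.union h1
    · exact hIJ.trans Set.subset_union_left
    · exact hIJ
    · exact Set.sdiff_subset_sdiff_left hIJ
    · exact Set.sdiff_subset.trans hIJ
    · exfalso
      apply h1
      have e : I \ {x} = I ∩ (J \ {x}) := by
        ext y
        constructor
        · rintro ⟨h, h'⟩
          exact ⟨h, hIJ h, h'⟩
        · rintro ⟨h, _, h'⟩
          exact ⟨h, h'⟩
      rw [e]
      exact hI.inter h2
    · exact hIJ
end

section
/- Let P be a finite partially ordered set and let L be a finite list of pairs (x, b) with x ∈ P and b a Boolean. Let F be the composite map on lower sets of P obtained by applying the single-site updates up(·, x, b) in the order given by L. If F(∅) = F(P) (the composite sends the empty lower set and the full lower set P to the same lower set), then F(I) = F(∅) for every lower set I of P. -/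
attribute [local instance] Classical.propDecidable

theorem up_lower {P : Type*} [PartialOrder P] {I : Set P} (hI : IsLowerSet I) (x : P) (b : Bool) :
    IsLowerSet (up I x b) := by
  unfold up
  split_ifs <;> assumption

theorem up_mono {P : Type*} [PartialOrder P] {I J : Set P} (hI : IsLowerSet I)
    (hJ : IsLowerSet J) (hIJ : I ⊆ J) (x : P) (b : Bool) : up I x b ⊆ up J x b := by
  unfold up
  cases b
  · by_cases h : IsLowerSet (J \ {x})
    · have h' : IsLowerSet (I \ {x}) := by
        intro a c hca ha
        exact ⟨hI hca ha.1, (h hca ⟨hIJ ha.1, ha.2⟩).2⟩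
      simpa only [h, h', if_true, if_false, Bool.false_eq_true] using
        Set.diff_subset_diff_left hIJ
    · simp only [h, if_false, Bool.false_eq_true]
      split_ifs
      · exact Set.diff_subset.trans hIJ
      · exact hIJ
  · by_cases h : IsLowerSet (I ∪ {x})
    · have h' : IsLowerSet (J ∪ {x}) := by
        intro a c hca ha
        rcases ha with ha | ha
        · exact Or.inl (hJ hca ha)
        · rcases h hca (Or.inr ha) with hc | hc
          · exact Or.inl (hIJ hc)
          · exact Or.inr hc
      simpa only [h, h', if_true] using Set.union_subset_union_left _ hIJ
    · simp only [h, if_false, if_true]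
      split_ifs
      · exact hIJ.trans Set.subset_union_left
      · exact hIJ

theorem foldl_up_mono {P : Type*} [PartialOrder P] (L : List (P × Bool)) :
    ∀ {I J : Set P}, IsLowerSet I → IsLowerSet J → I ⊆ J →
      L.foldl (fun s p => up s p.1 p.2) I ⊆ L.foldl (fun s p => up s p.1 p.2) J := by
  induction L with
  | nil => intro I J _ _ h; exact h
  | cons p L ih =>
    intro I J hI hJ h
    exact ih (up_lower hI _ _) (up_lower hJ _ _) (up_mono hI hJ h _ _)

/-- Coalescence ("squeezing") principle: if the composite of a finite list of
single-site updates sends the empty lower set `∅` and the full lower set `P`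
to the same lower set, then it sends every lower set to that common value. -/
theorem coalescence {P : Type*} [Fintype P] [PartialOrder P]
    (L : List (P × Bool))
    (F : Set P → Set P)
    (hF : ∀ I : Set P, F I = L.foldl (fun s p => up s p.1 p.2) I)
    (h : F (∅ : Set P) = F (Set.univ : Set P)) :
    ∀ I : Set P, IsLowerSet I → F I = F (∅ : Set P) := by
  intro I hI
  apply Set.Subset.antisymm
  · rw [h, hF, hF]
    exact foldl_up_mono L hI isLowerSet_univ (Set.subset_univ _)
  · rw [hF, hF]
    exact foldl_up_mono L isLowerSet_empty hI (Set.empty_subset _)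
end

section
/- Let P be a finite partially ordered set and fix x ∈ P. For every lower set J of P, the number of pairs (I, b), with I a lower set of P and b a Boolean, such that up(I,x,b) = J is exactly 2. (Hence each single-site randomization move, performed with a fair coin, preserves the uniform distribution on the set of lower sets of P.) -/
attribute [local instance] Classical.propDecidable

/-- The single-site fair-coin Markov chain on lower sets is doubly stochastic:
for each lower set `J`, exactly two pairs `(I, b)` of a lower set `I` and a
coin `b` satisfy `up I x b = J`.  Hence the uniform distribution on lower sets
is stationary. -/
theorem up_doubly_stochastic {P : Type*} [Fintype P] [PartialOrder P] (x : P)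
    (J : Set P) (hJ : IsLowerSet J) :
    Nat.card {p : Set P × Bool // IsLowerSet p.1 ∧ up p.1 x p.2 = J} = 2 := by
  have key : ∀ a c : Set P × Bool, a ≠ c →
      (∀ p : Set P × Bool, (IsLowerSet p.1 ∧ up p.1 x p.2 = J) ↔ (p = a ∨ p = c)) →
      Nat.card {p : Set P × Bool // IsLowerSet p.1 ∧ up p.1 x p.2 = J} = 2 := by
    intro a c hac h
    have h2 : {p : Set P × Bool | IsLowerSet p.1 ∧ up p.1 x p.2 = J} = {a, c} := by
      ext p
      simpa using h p
    have h3 := Set.ncard_pair hac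
    rw [← h2] at h3
    exact h3
  have ins : ∀ I : Set P, x ∈ I → I ∪ {x} = I := by
    intro I h; ext y; simp; rintro rfl; exact h
  have del : ∀ I : Set P, x ∉ I → I \ {x} = I := by
    intro I h; simp [h]
  have insdel : ∀ I : Set P, x ∈ I → I \ {x} ∪ {x} = I := by
    intro I h; simp [h]
  have delins : ∀ I : Set P, x ∉ I → (I ∪ {x}) \ {x} = I := by
    intro I h; simp [h]
  have m1 : ∀ I : Set P, x ∈ I ∪ {x} := by intro I; simp
  have m2 : ∀ I : Set P, x ∉ I \ {x} := by intro I; simp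
  by_cases hx : x ∈ J
  · by_cases hl : IsLowerSet (J \ {x})
    · refine key (J, true) (J \ {x}, true) ?_ ?_
      · grind
      · rintro ⟨I, b⟩
        by_cases hI : x ∈ I <;> cases b <;> simp only [up, Prod.mk.injEq] <;> grind
    · refine key (J, true) (J, false) (by simp) ?_
      rintro ⟨I, b⟩
      by_cases hI : x ∈ I <;> cases b <;> simp only [up, Prod.mk.injEq] <;> grind
  · by_cases hl : IsLowerSet (J ∪ {x})
    · refine key (J, false) (J ∪ {x}, false) ?_ ?_
      · grind
      · rintro ⟨I, b⟩
        by_cases hI : x ∈ I <;> cases b <;> simp only [up, Prod.mk.injEq] <;> grind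
    · refine key (J, true) (J, false) (by simp) ?_
      rintro ⟨I, b⟩
      by_cases hI : x ∈ I <;> cases b <;> simp only [up, Prod.mk.injEq] <;> grind
end

section
/- Let P be a finite partially ordered set and fix x ∈ P. For all lower sets I and J of P, the number of Booleans b with up(I,x,b) = J equals the number of Booleans b with up(J,x,b) = I. (The single-site fair-coin transition kernel on lower sets is symmetric, hence reversible with respect to the uniform distribution.) -/
attribute [local instance] Classical.propDecidable

/-- A move that really changes the lower set is undone by the opposite coin. -/
theorem up_reverse {P : Type*} [PartialOrder P] (x : P) (I J : Set P)
    (hI : IsLowerSet I) (hne : I ≠ J) (b : Bool) (h : up I x b = J) :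
    up J x (!b) = I := by
  cases b with
  | true =>
    by_cases hl : IsLowerSet (I ∪ {x})
    · have h1 : I ∪ {x} = J := by simpa only [up, hl, if_true, if_false, Bool.false_eq_true] using h
      have hx : x ∉ I := fun hx => hne (by rw [← h1]; ext y; simp; rintro rfl; exact hx)
      have h2 : J \ {x} = I := by
        rw [← h1]; ext y
        simp only [Set.mem_sdiff, Set.mem_union, Set.mem_singleton_iff]
        constructor
        · tauto
        · intro hy
          exact ⟨Or.inl hy, fun e => hx (e ▸ hy)⟩
      simp only [up, Bool.not_true, Bool.false_eq_true, if_false, h2, hI, if_true]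
    · exact absurd (by simpa only [up, hl, if_true, if_false, Bool.false_eq_true] using h) hne
  | false =>
    by_cases hl : IsLowerSet (I \ {x})
    · have h1 : I \ {x} = J := by simpa only [up, hl, if_true, if_false, Bool.false_eq_true] using h
      have hx : x ∈ I := by
        by_contra hx
        exact hne (by rw [← h1, Set.sdiff_singleton_eq_self hx])
      have h2 : J ∪ {x} = I := by
        rw [← h1, Set.sdiff_union_self]
        exact Set.union_eq_left.2 (Set.singleton_subset_iff.2 hx)
      simp only [up, Bool.not_false, h2, hI, if_true]
    · exact absurd (by simpa only [up, hl, if_true, if_false, Bool.false_eq_true] using h) hne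

/-- The single-site fair-coin transition kernel on lower sets is symmetric:
for lower sets `I` and `J`, the number of coins `b` with `up I x b = J` equals
the number of coins `b` with `up J x b = I`. -/
theorem up_symmetric {P : Type*} [Fintype P] [PartialOrder P] (x : P)
    (I J : Set P) (hI : IsLowerSet I) (hJ : IsLowerSet J) :
    Nat.card {b : Bool // up I x b = J} = Nat.card {b : Bool // up J x b = I} := by
  by_cases hne : I = J
  · rw [hne]
  · refine Nat.card_congr (Equiv.subtypeEquiv Equiv.boolNot fun b => ?_)
    constructor
    · exact up_reverse x I J hI hne b
    · intro h
      have := up_reverse x J I hJ (Ne.symm hne) (!b) h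
      simpa using this
end

section
/- Let G be a simple graph on a vertex set V together with a 2-coloring c : V → Bool such that every edge of G joins a vertex colored true (black) to a vertex colored false (white). For a subset S ⊆ V write S_B = S ∩ c⁻¹(true) and S_W = S ∩ c⁻¹(false). If S and T are independent sets of G, then both (S_B ∪ T_B) ∪ (S_W ∩ T_W) and (S_B ∩ T_B) ∪ (S_W ∪ T_W) are independent sets of G. (These operations are the join and meet making the set of independent sets of a bipartite graph a distributive lattice.) -/
/-- A set of vertices is independent if no two of its elements are adjacent. -/
def IsIndepSet {V : Type*} (G : SimpleGraph V) (S : Set V) : Prop :=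
  ∀ u ∈ S, ∀ v ∈ S, ¬ G.Adj u v

/-- For a bipartite graph (2-colored so that every edge joins a black (`true`)
vertex to a white (`false`) vertex), the join and meet
`(S_B ∪ T_B) ∪ (S_W ∩ T_W)` and `(S_B ∩ T_B) ∪ (S_W ∪ T_W)` of two independent
sets are again independent sets.  (These operations make the independent sets
of a bipartite graph a distributive lattice.) -/
theorem indepSet_join_meet {V : Type*} (G : SimpleGraph V) (c : V → Bool)
    (hc : ∀ u v : V, G.Adj u v → c u ≠ c v)
    (S T : Set V) (hS : IsIndepSet G S) (hT : IsIndepSet G T) :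
    IsIndepSet G (((S ∩ c ⁻¹' {true}) ∪ (T ∩ c ⁻¹' {true})) ∪
        ((S ∩ c ⁻¹' {false}) ∩ (T ∩ c ⁻¹' {false}))) ∧
    IsIndepSet G (((S ∩ c ⁻¹' {true}) ∩ (T ∩ c ⁻¹' {true})) ∪
        ((S ∩ c ⁻¹' {false}) ∪ (T ∩ c ⁻¹' {false}))) := by
  constructor <;>
  · intro u hu v hv h
    have h1 := hc u v h
    have h2 := hS u
    have h3 := hT u
    simp only [Set.mem_union, Set.mem_inter_iff, Set.mem_preimage, Set.mem_singleton_iff] at hu hv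
    grind
end

section
/- Let n be a positive natural number. Call an n × n integer matrix A an alternating sign matrix if every row sum and every column sum equals 1 and every partial row sum Σ_{j' ≤ j} A(i,j') and every partial column sum Σ_{i' ≤ i} A(i',j) lies in {0,1}. For an alternating sign matrix A define its corner-sum array h_A on {0,…,n} × {0,…,n} by h_A(i,j) = Σ_{i' < i} Σ_{j' < j} A(i',j'). Then for any two n × n alternating sign matrices A and B there exist n × n alternating sign matrices C and D such that h_C is the entrywise minimum of h_A and h_B and h_D is the entrywise maximum of h_A and h_B. (Hence the set of n × n alternating sign matrices becomes a distributive lattice.) -/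
open Finset

/-- An `n × n` integer matrix is an alternating sign matrix if every row sum
and every column sum equals `1` and every partial row sum and every partial
column sum lies in `{0, 1}`. -/
def IsASM {n : ℕ} (A : Matrix (Fin n) (Fin n) ℤ) : Prop :=
  (∀ i, ∑ j, A i j = 1) ∧ (∀ j, ∑ i, A i j = 1) ∧
  (∀ i j, (∑ j' ∈ univ.filter (fun j' => j' ≤ j), A i j') ∈ ({0, 1} : Set ℤ)) ∧
  (∀ i j, (∑ i' ∈ univ.filter (fun i' => i' ≤ i), A i' j) ∈ ({0, 1} : Set ℤ))

/-- The corner-sum array of an `n × n` matrix: `h_A i j = Σ_{i' < i} Σ_{j' < j} A i' j'`. -/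
def cornerSum {n : ℕ} (A : Matrix (Fin n) (Fin n) ℤ) (i j : Fin (n + 1)) : ℤ :=
  ∑ i' ∈ univ.filter (fun i' : Fin n => (i' : ℕ) < (i : ℕ)),
    ∑ j' ∈ univ.filter (fun j' : Fin n => (j' : ℕ) < (j : ℕ)), A i' j'

/-- Prefix sums over `Fin n`. -/
def prefSum {n : ℕ} (f : Fin n → ℤ) (k : ℕ) : ℤ :=
  ∑ i ∈ univ.filter (fun i : Fin n => (i : ℕ) < k), f i

lemma prefSum_zero {n : ℕ} (f : Fin n → ℤ) : prefSum f 0 = 0 := by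
  simp [prefSum]

lemma prefSum_succ {n : ℕ} (f : Fin n → ℤ) (k : ℕ) (hk : k < n) :
    prefSum f (k + 1) = prefSum f k + f ⟨k, hk⟩ := by
  unfold prefSum
  have : univ.filter (fun i : Fin n => (i : ℕ) < k + 1)
      = insert ⟨k, hk⟩ (univ.filter (fun i : Fin n => (i : ℕ) < k)) := by
    ext i
    simp only [mem_filter, mem_univ, true_and, mem_insert, Fin.ext_iff]
    omega
  rw [this, sum_insert (by simp), add_comm]

lemma prefSum_top {n : ℕ} (f : Fin n → ℤ) : prefSum f n = ∑ i, f i := by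
  simp [prefSum]

lemma prefSum_le {n : ℕ} (f : Fin n → ℤ) (j : Fin n) :
    ∑ i ∈ univ.filter (fun i => i ≤ j), f i = prefSum f (j + 1) := by
  unfold prefSum
  congr 1
  ext i
  simp only [mem_filter, mem_univ, true_and, Fin.le_def]
  omega

/-- A prefix sum is determined by its increments. -/
lemma prefSum_eq {n : ℕ} (f : Fin n → ℤ) (g : ℕ → ℤ) (h0 : g 0 = 0)
    (h : ∀ k (hk : k < n), g (k + 1) = g k + f ⟨k, hk⟩) (k : ℕ) (hk : k ≤ n) :
    prefSum f k = g k := by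
  induction k with
  | zero => rw [prefSum_zero, h0]
  | succ k ih => rw [prefSum_succ f k hk, h k hk, ih (by omega)]

/-- Corner sums indexed by natural numbers. -/
def natCorner {n : ℕ} (A : Matrix (Fin n) (Fin n) ℤ) (i j : ℕ) : ℤ :=
  prefSum (fun i' => prefSum (A i') j) i

lemma natCorner_comm {n : ℕ} (A : Matrix (Fin n) (Fin n) ℤ) (i j : ℕ) :
    natCorner A i j = prefSum (fun j' => prefSum (fun i' => A i' j') i) j := by
  unfold natCorner prefSum
  exact sum_comm

/-- Arrays arising as corner sums of alternating sign matrices. -/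
structure GoodArr (n : ℕ) (H : ℕ → ℕ → ℤ) : Prop where
  left : ∀ i ≤ n, H i 0 = 0
  top : ∀ j ≤ n, H 0 j = 0
  right : ∀ i ≤ n, H i n = i
  bot : ∀ j ≤ n, H n j = j
  row : ∀ i < n, ∀ j ≤ n, H (i + 1) j = H i j ∨ H (i + 1) j = H i j + 1
  col : ∀ i ≤ n, ∀ j < n, H i (j + 1) = H i j ∨ H i (j + 1) = H i j + 1

lemma prefSum_one {n : ℕ} (k : ℕ) (hk : k ≤ n) : prefSum (fun _ : Fin n => 1) k = k :=
  prefSum_eq _ (fun k => (k : ℤ)) (by simp) (by simp) k hk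

lemma prefSum_zero_or_one {n : ℕ} (f : Fin n → ℤ)
    (h : ∀ j, ∑ i ∈ univ.filter (fun i => i ≤ j), f i ∈ ({0, 1} : Set ℤ)) (k : ℕ) (hk : k ≤ n) :
    prefSum f k = 0 ∨ prefSum f k = 1 := by
  cases k with
  | zero => left; exact prefSum_zero f
  | succ k =>
    have := h ⟨k, hk⟩
    rw [prefSum_le] at this
    simpa using this

lemma IsASM.good {n : ℕ} {A : Matrix (Fin n) (Fin n) ℤ} (hA : IsASM A) :
    GoodArr n (natCorner A) := by
  obtain ⟨h1, h2, h3, h4⟩ := hA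
  refine ⟨?_, ?_, ?_, ?_, ?_, ?_⟩
  · intro i _
    rw [natCorner_comm, prefSum_zero]
  · intro j _
    rw [natCorner, prefSum_zero]
  · intro i hi
    simp only [natCorner, prefSum_top, h1]
    exact prefSum_one i hi
  · intro j hj
    simp only [natCorner_comm, prefSum_top, h2]
    exact prefSum_one j hj
  · intro i hi j hj
    have := prefSum_zero_or_one (A ⟨i, hi⟩) (h3 ⟨i, hi⟩) j hj
    simp only [natCorner]
    rw [prefSum_succ _ i hi]
    omega
  · intro i hi j hj
    have := prefSum_zero_or_one (fun i' => A i' ⟨j, hj⟩) (fun i' => h4 i' ⟨j, hj⟩) i hi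
    simp only [natCorner_comm]
    rw [prefSum_succ _ j hj]
    omega

lemma GoodArr.exists_asm {n : ℕ} {H : ℕ → ℕ → ℤ} (hH : GoodArr n H) :
    ∃ C : Matrix (Fin n) (Fin n) ℤ, IsASM C ∧ ∀ i ≤ n, ∀ j ≤ n, natCorner C i j = H i j := by
  let C : Matrix (Fin n) (Fin n) ℤ := fun i j =>
    H (i + 1) (j + 1) - H i (j + 1) - H (i + 1) j + H i j
  have hr : ∀ (i : Fin n) (j : ℕ), j ≤ n → prefSum (C i) j = H (i + 1) j - H i j := by
    intro i j hj
    refine prefSum_eq (C i) (fun j => H (i + 1) j - H i j) ?_ ?_ j hj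
    · have := hH.left i (by omega)
      have := hH.left (i + 1) (by omega)
      omega
    · intro k hk
      simp only [C]; ring
  have hc : ∀ (j : Fin n) (i : ℕ), i ≤ n →
      prefSum (fun i' => C i' j) i = H i (j + 1) - H i j := by
    intro j i hi
    refine prefSum_eq (fun i' => C i' j) (fun i => H i (j + 1) - H i j) ?_ ?_ i hi
    · have := hH.top j (by omega)
      have := hH.top (j + 1) (by omega)
      omega
    · intro k hk
      simp only [C]; ring
  refine ⟨C, ⟨?_, ?_, ?_, ?_⟩, ?_⟩
  · intro i
    rw [← prefSum_top, hr i n le_rfl, hH.right _ (by omega), hH.right _ (by omega)]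
    push_cast; ring
  · intro j
    rw [← prefSum_top (fun i => C i j), hc j n le_rfl, hH.bot _ (by omega), hH.bot _ (by omega)]
    push_cast; ring
  · intro i j
    rw [prefSum_le, hr i _ (by omega)]
    have := hH.row i i.2 (j + 1) (by omega)
    simp only [Set.mem_insert_iff, Set.mem_singleton_iff]
    omega
  · intro i j
    rw [prefSum_le (fun i' => C i' j), hc j _ (by omega)]
    have := hH.col (i + 1) (by omega) j j.2
    simp only [Set.mem_insert_iff, Set.mem_singleton_iff]
    omega
  · intro i hi j hj
    unfold natCorner
    refine prefSum_eq _ (fun i => H i j) (hH.top j hj) ?_ i hi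
    intro k hk
    simp only [hr ⟨k, hk⟩ j hj]; ring

lemma GoodArr.min {n : ℕ} {H K : ℕ → ℕ → ℤ} (hH : GoodArr n H) (hK : GoodArr n K) :
    GoodArr n (fun i j => Min.min (H i j) (K i j)) := by
  refine ⟨?_, ?_, ?_, ?_, ?_, ?_⟩
  · intro i hi; simp [hH.left i hi, hK.left i hi]
  · intro i hi; simp [hH.top i hi, hK.top i hi]
  · intro i hi; simp [hH.right i hi, hK.right i hi]
  · intro i hi; simp [hH.bot i hi, hK.bot i hi]
  · intro i hi j hj
    have := hH.row i hi j hj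
    have := hK.row i hi j hj
    omega
  · intro i hi j hj
    have := hH.col i hi j hj
    have := hK.col i hi j hj
    omega

lemma GoodArr.max {n : ℕ} {H K : ℕ → ℕ → ℤ} (hH : GoodArr n H) (hK : GoodArr n K) :
    GoodArr n (fun i j => Max.max (H i j) (K i j)) := by
  refine ⟨?_, ?_, ?_, ?_, ?_, ?_⟩
  · intro i hi; simp [hH.left i hi, hK.left i hi]
  · intro i hi; simp [hH.top i hi, hK.top i hi]
  · intro i hi; simp [hH.right i hi, hK.right i hi]
  · intro i hi; simp [hH.bot i hi, hK.bot i hi]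
  · intro i hi j hj
    have := hH.row i hi j hj
    have := hK.row i hi j hj
    omega
  · intro i hi j hj
    have := hH.col i hi j hj
    have := hK.col i hi j hj
    omega

/-- For any two `n × n` alternating sign matrices `A` and `B` there are
alternating sign matrices `C` and `D` whose corner-sum arrays are the
entrywise minimum, resp. maximum, of those of `A` and `B`.  Hence the `n × n`
alternating sign matrices form a distributive lattice. -/
theorem asm_lattice {n : ℕ} (hn : 0 < n) (A B : Matrix (Fin n) (Fin n) ℤ)
    (hA : IsASM A) (hB : IsASM B) :
    ∃ C D : Matrix (Fin n) (Fin n) ℤ, IsASM C ∧ IsASM D ∧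
      (∀ i j : Fin (n + 1), cornerSum C i j = min (cornerSum A i j) (cornerSum B i j)) ∧
      (∀ i j : Fin (n + 1), cornerSum D i j = max (cornerSum A i j) (cornerSum B i j)) := by
  obtain ⟨C, hC, hC'⟩ := (hA.good.min hB.good).exists_asm
  obtain ⟨D, hD, hD'⟩ := (hA.good.max hB.good).exists_asm
  exact ⟨C, D, hC, hD, fun i j => hC' i (by omega) j (by omega),
    fun i j => hD' i (by omega) j (by omega)⟩
end

section
/- For every natural number n, the number of antitone functions f : Fin n → ℕ satisfying f(i) ≤ n − 1 − i for all i < n equals the n-th Catalan number. (Equivalently, the minimal-length lattice paths of length 2n from (0,n) to (n,0) that do not stray outside the triangle with vertices (0,0), (n,0), (0,n) are counted by the Catalan number.) -/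
/-- Staircase partitions whose parts are all at most `m`. -/
def StairPart (n m : ℕ) : Type :=
  {f : Fin n → ℕ // Antitone f ∧ ∀ i : Fin n, f i ≤ n - 1 - (i : ℕ) ∧ f i ≤ m}

instance stairPart_finite (n m : ℕ) : Finite (StairPart n m) := by
  refine Finite.of_injective
    (fun f : StairPart n m => fun i => (⟨f.1 i, Nat.lt_succ_of_le (f.2.2 i).2⟩ : Fin (m + 1))) ?_
  intro f g h
  apply Subtype.ext
  funext i
  have := congrFun h i
  simpa using this

/-- Splitting off the first (largest) part. -/
def stairPartEquiv (n m : ℕ) (hm : m ≤ n) :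
    StairPart (n + 1) m ≃ Σ k : Fin (m + 1), StairPart n k where
  toFun f := ⟨⟨f.1 0, Nat.lt_succ_of_le (f.2.2 0).2⟩,
    ⟨fun i => f.1 i.succ, fun i j h => f.2.1 (Fin.succ_le_succ_iff.2 h), fun i =>
      ⟨by have := (f.2.2 i.succ).1; simp only [Fin.val_succ] at this; show f.1 i.succ ≤ _; omega,
       f.2.1 (Fin.zero_le _)⟩⟩⟩
  invFun p := ⟨Fin.cons (p.1 : ℕ) p.2.1, by
    obtain ⟨k, g, hg, hb⟩ := p
    constructor
    · intro i j
      refine Fin.cases ?_ (fun i => ?_) i <;> refine Fin.cases ?_ (fun j => ?_) j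
      · simp
      · intro _
        simpa using (hb j).2
      · intro h
        exact absurd h (by simp)
      · intro h
        simpa using hg (Fin.succ_le_succ_iff.1 h)
    · intro i
      have hk := k.2
      refine Fin.cases ?_ (fun i => ?_) i
      · simp only [Fin.cons_zero, Fin.val_zero]
        omega
      · have := hb i
        simp only [Fin.cons_succ, Fin.val_succ]
        omega⟩
  left_inv f := by
    apply Subtype.ext
    exact Fin.cons_self_tail f.1
  right_inv p := by
    obtain ⟨k, g, hg⟩ := p
    rfl

theorem stairPart_rec (n m : ℕ) (hm : m ≤ n) :
    Nat.card (StairPart (n + 1) m) = ∑ k ∈ Finset.range (m + 1), Nat.card (StairPart n k) := by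
  rw [Nat.card_congr (stairPartEquiv n m hm), Nat.card_sigma,
    Finset.sum_range (fun k => Nat.card (StairPart n k))]

theorem stairPart_top (n : ℕ) :
    Nat.card (StairPart (n + 1) (n + 1)) = Nat.card (StairPart (n + 1) n) := by
  refine Nat.card_congr (Equiv.subtypeEquivRight fun f => ?_)
  refine and_congr_right fun _ => forall_congr' fun i => ?_
  omega

theorem stairPart_formula (n : ℕ) : Nat.card (StairPart n 0) = 1 ∧
    ∀ m, m + 1 ≤ n → Nat.card (StairPart n (m + 1)) + (n + m + 1).choose m
      = (n + m + 1).choose (m + 1) := by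
  induction n with
  | zero =>
    refine ⟨?_, fun m h => by omega⟩
    rw [Nat.card_eq_one_iff_unique]
    refine ⟨⟨fun f g => Subtype.ext (funext fun i => i.elim0)⟩,
      ⟨⟨fun i => i.elim0, fun i => i.elim0, fun i => i.elim0⟩⟩⟩
  | succ n ih =>
    have h0 : Nat.card (StairPart (n + 1) 0) = 1 := by
      rw [stairPart_rec n 0 (Nat.zero_le _)]
      simpa using ih.1
    refine ⟨h0, fun m => ?_⟩
    induction m with
    | zero =>
      intro _
      rcases Nat.eq_zero_or_pos n with rfl | hn
      · rw [stairPart_top, h0]; simp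
      · have h1 := ih.2 0 hn
        rw [stairPart_rec n _ hn, Finset.sum_range_succ, Finset.sum_range_one, ih.1]
        simp at h1 ⊢
        omega
    | succ m ihm =>
      intro hm
      have h2 := ihm (by omega)
      have p1 := Nat.choose_succ_succ' (n + m + 2) m
      have p2 := Nat.choose_succ_succ' (n + m + 2) (m + 1)
      rw [show n + 1 + m + 1 = n + m + 2 by omega] at h2
      rw [show n + 1 + (m + 1) + 1 = n + m + 2 + 1 by omega]
      rcases Nat.lt_or_ge n (m + 1 + 1) with h | h
      · obtain rfl : n = m + 1 := by omega
        rw [stairPart_top]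
        have := Nat.choose_symm_of_eq_add (n := m + 1 + m + 2) (a := m + 1) (b := m + 1 + 1)
          (by omega)
        omega
      · have h1 := ih.2 (m + 1) h
        rw [stairPart_rec n _ h, Finset.sum_range_succ, ← stairPart_rec n _ (by omega)]
        rw [show n + (m + 1) + 1 = n + m + 2 by omega] at h1
        rw [show m + 1 + 1 = m + 2 from rfl] at *
        omega

/-- Partitions fitting in the staircase shape `(n-1, n-2, …, 1, 0)` — i.e.
antitone functions `f : Fin n → ℕ` with `f i ≤ n - 1 - i` — are counted by the
`n`-th Catalan number.  Equivalently, the lattice paths of length `2n` from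
`(0,n)` to `(n,0)` staying inside the triangle with vertices `(0,0)`, `(n,0)`,
`(0,n)` are counted by the Catalan number. -/
theorem card_staircase_partitions (n : ℕ) :
    Nat.card {f : Fin n → ℕ // Antitone f ∧ ∀ i : Fin n, f i ≤ n - 1 - (i : ℕ)} =
      catalan n := by
  have e : Nat.card {f : Fin n → ℕ // Antitone f ∧ ∀ i : Fin n, f i ≤ n - 1 - (i : ℕ)} =
      Nat.card (StairPart n n) := by
    refine Nat.card_congr (Equiv.subtypeEquivRight fun f => ?_)
    refine and_congr_right fun _ => forall_congr' fun i => ?_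
    omega
  rw [e]
  cases n with
  | zero => rw [(stairPart_formula 0).1, catalan_zero]
  | succ n =>
    have h := (stairPart_formula (n + 1)).2 n le_rfl
    have hc := succ_mul_catalan_eq_centralBinom (n + 1)
    rw [Nat.centralBinom, show 2 * (n + 1) = n + 1 + n + 1 by omega] at hc
    have hs := Nat.choose_succ_right_eq (n + 1 + n + 1) n
    rw [show n + 1 + n + 1 - n = n + 2 by omega] at hs
    apply Nat.eq_of_mul_eq_mul_left (show 0 < n + 1 + 1 by omega)
    rw [hc]
    nlinarith
end
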